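/- arXiv:1603.01115 — 2 statements merged into one kernel-verified Lean document; each statement's English description precedes it below -/
import Mathlib

section
/- Fix K ≥ 2 and reals α_i > 0, E_i^b > 0, w_i ≥ 0 for i = 1,…,K, and E_max > 0. Let F = {(E₁,…,E_K, τ₀, τ₁,…,τ_K) : τ_i ≥ 0 for i = 0,…,K, Σ_{i=0}^K τ_i ≤ 1, 0 ≤ E_i ≤ E_i^b + w_i·τ₀ for all i, and Σ_{i=1}^K E_i ≤ E_max}, and define R_i(E_i, τ_i) = τ_i · log₂(1 + α_i·E_i/τ_i) for τ_i > 0 and R_i(E_i, 0) = 0. If (E*, τ*) ∈ F satisfies min_{1 ≤ i ≤ K} R_i(E_i*, τ_i*) ≥ min_{1 ≤ i ≤ K} R_i(E_i, τ_i) for every (E, τ) ∈ F, then R_i(E_i*, τ_i*) = R_j(E_j*, τ_j*) for all i, j ∈ {1,…,K}. -/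
/-!
If user `j` had a rate above the minimum, a little of its transmission time could be split evenly
among all users: by continuity `j` stays above the old minimum, and by strict monotonicity in time
everyone else rises above it. Energies and harvesting time stay fixed, so no energy constraint is
affected. Strict monotonicity needs every user to spend positive energy, which holds because some
feasible policy has a positive minimum rate.
-/

open Set Topology

section TimeAllocation

variable {ι β : Type*} [Fintype ι] [TopologicalSpace β] {r : ι → ℝ → β} {t : ι → ℝ}

lemma exists_transfer_forall_lt [LinearOrder β] [OrderClosedTopology β] {m : β} {j : ι}
    (hmono : ∀ i, StrictMonoOn (r i) (Ici 0)) (hcont : ContinuousAt (r j) (t j))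
    (ht : 0 ≤ t) (htj : 0 < t j) (hle : ∀ i, m ≤ r i (t i)) (hlt : m < r j (t j)) :
    ∃ s : ι → ℝ, 0 ≤ s ∧ ∑ i, s i = ∑ i, t i ∧ ∀ i, m < r i (s i) := by
  classical
  have hshift : ContinuousAt (fun ε => r j (t j - ε)) 0 :=
    ContinuousAt.comp (g := r j) (by simpa using hcont) (by fun_prop)
  have hnear : ∀ᶠ ε in 𝓝 (0 : ℝ), m < r j (t j - ε) ∧ ε < t j :=
    (hshift.eventually_const_lt (by simpa using hlt)).and (Iio_mem_nhds htj)
  obtain ⟨ε, ⟨hεm, hεt⟩, hε : 0 < ε⟩ :=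
    ((hnear.filter_mono nhdsWithin_le_nhds).and (self_mem_nhdsWithin (s := Ioi 0))).exists
  have : Nonempty ι := ⟨j⟩
  let δ := ε / Fintype.card ι
  have hδ : 0 < δ := by positivity
  let u := t - Pi.single j ε
  have hu : 0 ≤ u := fun i => by
    obtain rfl | hij := eq_or_ne i j
    · simpa [u] using hεt.le
    · simpa [u, hij] using ht i
  have hum : ∀ i, m ≤ r i (u i) := fun i => by
    obtain rfl | hij := eq_or_ne i j
    · simpa [u] using hεm.le
    · simpa [u, hij] using hle i
  refine ⟨fun i => u i + δ, fun i => add_nonneg (hu i) hδ.le, ?_, fun i => ?_⟩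
  · have hsum : ∑ _i : ι, δ = ε := by simp [δ, field]
    simp [Finset.sum_add_distrib, hsum, u]
  · exact (hum i).trans_lt <| hmono i (hu i) (add_nonneg (hu i) hδ.le) (lt_add_of_pos_right _ hδ)

theorem eq_iInf_of_isMaxOn_iInf [ConditionallyCompleteLinearOrder β] [OrderClosedTopology β]
    {T : ℝ} (hzero : ∀ i j, r i 0 = r j 0) (hmono : ∀ i, StrictMonoOn (r i) (Ici 0))
    (hcont : ∀ i, ContinuousOn (r i) (Ioi 0)) (ht : 0 ≤ t) (hT : ∑ i, t i ≤ T)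
    (hmax : IsMaxOn (fun s => ⨅ i, r i (s i)) {s | 0 ≤ s ∧ ∑ i, s i ≤ T} t) (j : ι) :
    r j (t j) = ⨅ i, r i (t i) := by
  have : Nonempty ι := ⟨j⟩
  have hle : ∀ i, ⨅ k, r k (t k) ≤ r i (t i) := ciInf_le (finite_range _).bddBelow
  by_contra hne
  have hlt := (hle j).lt_of_ne' hne
  have htj : 0 < t j := (ht j).lt_of_ne' fun (h0 : t j = 0) => by
    obtain ⟨i, hi⟩ := exists_eq_ciInf_of_finite (f := fun i => r i (t i))
    rw [← hi, h0, hzero j i] at hlt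
    exact hlt.not_ge ((hmono i).monotoneOn self_mem_Ici (ht i) (ht i))
  obtain ⟨s, hs, hsum, hgt⟩ := exists_transfer_forall_lt hmono
    ((hcont j).continuousAt (Ioi_mem_nhds htj)) ht htj hle hlt
  obtain ⟨i, hi⟩ := exists_eq_ciInf_of_finite (f := fun i => r i (s i))
  exact (hi ▸ hgt i).not_ge (hmax ⟨hs, hsum.trans_le hT⟩)

end TimeAllocation

lemma exists_pos_le_sum_le {ι : Type*} [Fintype ι] {b : ι → ℝ} {B : ℝ} (hb : ∀ i, 0 < b i)
    (hB : 0 < B) : ∃ x : ι → ℝ, (∀ i, 0 < x i ∧ x i ≤ b i) ∧ ∑ i, x i ≤ B := by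
  refine ⟨fun i => min (b i) (B / Fintype.card ι), fun i => ⟨?_, min_le_left _ _⟩, ?_⟩
  · have : Nonempty ι := ⟨i⟩
    exact lt_min (hb i) (by positivity)
  · calc ∑ i, min (b i) (B / Fintype.card ι) ≤ ∑ _i : ι, B / Fintype.card ι :=
          Finset.sum_le_sum fun i _ => min_le_right _ _
      _ = Fintype.card ι * (B / Fintype.card ι) := by simp
      _ = B * (Fintype.card ι / Fintype.card ι) := mul_div_left_comm _ _ _
      _ ≤ B := mul_le_of_le_one_right hB.le (div_self_le_one _)

/-- The throughput `R(E, s) = s log₂ (1 + α E / s)` of a user transmitting for time `s`, as a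
function of `c = α E` and `s`; division by zero makes it vanish at `s = 0`. -/
noncomputable def rate (c s : ℝ) : ℝ := s * Real.logb 2 (1 + c / s)

section Rate

variable {c s : ℝ}

@[simp] lemma rate_zero_left (s : ℝ) : rate 0 s = 0 := by simp [rate]

@[simp] lemma rate_zero_right (c : ℝ) : rate c 0 = 0 := by simp [rate]

lemma rate_pos (hc : 0 < c) (hs : 0 < s) : 0 < rate c s :=
  mul_pos hs (Real.logb_pos one_lt_two (lt_add_of_pos_right 1 (div_pos hc hs)))

lemma strictMonoOn_rate (hc : 0 < c) : StrictMonoOn (rate c) (Ici 0) := by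
  intro s (hs : 0 ≤ s) t _ hst
  obtain rfl | hs := hs.eq_or_lt
  · simpa using rate_pos hc hst
  have ht : 0 < t := hs.trans hst
  have bernoulli : 1 + c / s < (1 + c / t) ^ (t / s) := by
    have h := one_add_mul_self_lt_rpow_one_add (s := c / t) (by linarith [div_pos hc ht])
      (div_pos hc ht).ne' ((one_lt_div hs).2 hst)
    rwa [show t / s * (c / t) = c / s by field_simp] at h
  calc s * Real.logb 2 (1 + c / s)
      < s * Real.logb 2 ((1 + c / t) ^ (t / s)) := by
        gcongr
        exact one_lt_two
    _ = t * Real.logb 2 (1 + c / t) := by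
        rw [Real.logb_rpow_eq_mul_logb_of_pos (by positivity), ← mul_assoc,
          mul_div_cancel₀ _ hs.ne']

lemma continuousOn_rate (hc : 0 ≤ c) : ContinuousOn (rate c) (Ioi 0) := by
  have hdiv : ContinuousOn (fun s => 1 + c / s) (Ioi 0) :=
    continuousOn_const.add (continuousOn_const.div continuousOn_id fun s hs => ne_of_gt hs)
  exact continuousOn_id.mul ((hdiv.log fun s (hs : 0 < s) => by positivity).div_const _)

end Rate

section Policy

variable {K : ℕ} {α : Fin K → ℝ} {b : Fin K → ℝ → ℝ} {Emax : ℝ}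

/-- The policies `(E, τ)` feasible for a unit frame and total energy `Emax`: user `i` spends `E i`,
of which at most `b i s` is available after harvesting for time `s = τ 0`, and transmits for time
`τ i.succ`. -/
def feasiblePolicies (b : Fin K → ℝ → ℝ) (Emax : ℝ) : Set ((Fin K → ℝ) × (Fin (K + 1) → ℝ)) :=
  {p | (∀ i, 0 ≤ p.2 i) ∧ ∑ i, p.2 i ≤ 1 ∧ (∀ i, 0 ≤ p.1 i ∧ p.1 i ≤ b i (p.2 0)) ∧
    ∑ i, p.1 i ≤ Emax}

/-- The max–min objective: the smallest user throughput under the policy `(E, τ)`. -/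
noncomputable def minRate (α : Fin K → ℝ) (p : (Fin K → ℝ) × (Fin (K + 1) → ℝ)) : ℝ :=
  ⨅ i, rate (α i * p.1 i) (p.2 i.succ)

lemma minRate_le (α : Fin K → ℝ) (p : (Fin K → ℝ) × (Fin (K + 1) → ℝ)) (i : Fin K) :
    minRate α p ≤ rate (α i * p.1 i) (p.2 i.succ) :=
  ciInf_le (finite_range _).bddBelow i

lemma exists_mem_feasiblePolicies_minRate_pos [NeZero K] (hα : ∀ i, 0 < α i)
    (hb : ∃ s ∈ Ico (0 : ℝ) 1, ∀ i, 0 < b i s) (hEmax : 0 < Emax) :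
    ∃ p ∈ feasiblePolicies b Emax, 0 < minRate α p := by
  obtain ⟨s, ⟨hs₀, hs₁⟩, hbs⟩ := hb
  obtain ⟨E, hE, hEsum⟩ := exists_pos_le_sum_le hbs hEmax
  have hK : (0 : ℝ) < K := mod_cast NeZero.pos K
  have hshare : 0 < (1 - s) / K := div_pos (sub_pos.2 hs₁) hK
  refine ⟨(E, Fin.cons s fun _ => (1 - s) / K),
    ⟨?_, ?_, fun i => ⟨(hE i).1.le, (hE i).2⟩, hEsum⟩, ?_⟩
  · exact Fin.cases hs₀ fun _ => hshare.le
  · simp [Fin.sum_univ_succ, mul_div_cancel₀ _ hK.ne']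
  · obtain ⟨i, hi⟩ := exists_eq_ciInf_of_finite (f := fun i => rate (α i * E i) ((1 - s) / K))
    exact (rate_pos (mul_pos (hα i) (hE i).1) hshare).trans_eq hi

lemma energy_pos_of_isMaxOn_minRate {p : (Fin K → ℝ) × (Fin (K + 1) → ℝ)} (hα : ∀ i, 0 < α i)
    (hb : ∃ s ∈ Ico (0 : ℝ) 1, ∀ i, 0 < b i s) (hEmax : 0 < Emax)
    (hp : p ∈ feasiblePolicies b Emax) (hmax : IsMaxOn (minRate α) (feasiblePolicies b Emax) p)
    (i : Fin K) : 0 < p.1 i := by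
  have : NeZero K := ⟨i.pos.ne'⟩
  obtain ⟨q, hq, hqpos⟩ := exists_mem_feasiblePolicies_minRate_pos hα hb hEmax
  have hrate : 0 < rate (α i * p.1 i) (p.2 i.succ) :=
    hqpos.trans_le <| (hmax hq).trans <| minRate_le α p i
  exact (hp.2.2.1 i).1.lt_of_ne' fun h0 => hrate.ne' (by simp [h0])

theorem maxmin_equal_rates_general {p : (Fin K → ℝ) × (Fin (K + 1) → ℝ)} (hα : ∀ i, 0 < α i)
    (hb : ∃ s ∈ Ico (0 : ℝ) 1, ∀ i, 0 < b i s) (hEmax : 0 < Emax)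
    (hp : p ∈ feasiblePolicies b Emax) (hmax : IsMaxOn (minRate α) (feasiblePolicies b Emax) p)
    (i j : Fin K) : rate (α i * p.1 i) (p.2 i.succ) = rate (α j * p.1 j) (p.2 j.succ) := by
  have hc : ∀ k, 0 < α k * p.1 k := fun k =>
    mul_pos (hα k) (energy_pos_of_isMaxOn_minRate hα hb hEmax hp hmax k)
  obtain ⟨hτ, hsum, hE, hEsum⟩ := hp
  have htime : ∑ k, Fin.tail p.2 k ≤ 1 - p.2 0 := by
    rw [Fin.sum_univ_succ] at hsum
    exact le_sub_iff_add_le'.2 hsum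
  have hmaxTime : IsMaxOn (fun t => ⨅ k, rate (α k * p.1 k) (t k))
      {t | 0 ≤ t ∧ ∑ k, t k ≤ 1 - p.2 0} (Fin.tail p.2) := fun t ⟨ht, htsum⟩ =>
    hmax (a := (p.1, Fin.cons (p.2 0) t)) ⟨Fin.cases (hτ 0) ht,
      by simpa [Fin.sum_univ_succ] using le_sub_iff_add_le'.1 htsum, hE, hEsum⟩
  have heq := eq_iInf_of_isMaxOn_iInf (fun _ _ => by simp only [rate_zero_right])
    (fun k => strictMonoOn_rate (hc k)) (fun k => continuousOn_rate (hc k).le)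
    (fun k => hτ k.succ) htime hmaxTime
  exact (heq i).trans (heq j).symm

end Policy

/-- Theorem 4 of the paper: any optimal policy of the max–min problem
`P1^Maxmin` equalizes the throughputs of all users.  Here `E : Fin K → ℝ`
collects the users' energies, `τ : Fin (K+1) → ℝ` the time allocations
(`τ 0` is the harvesting time, user `i` transmits during `τ i.succ`), and
`w i = ηᵢ P_B hᵢ`.  (In Lean, `τ * Real.logb 2 (1 + c / τ)` equals `0` at
`τ = 0`, matching the convention `Rᵢ(Eᵢ, 0) = 0`.) -/
theorem maxmin_equal_rates (K : ℕ) (hK : 2 ≤ K) (α Eb w : Fin K → ℝ)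
    (Emax : ℝ) (hα : ∀ i, 0 < α i) (hEb : ∀ i, 0 < Eb i)
    (hw : ∀ i, 0 ≤ w i) (hEmax : 0 < Emax)
    (Estar : Fin K → ℝ) (τstar : Fin (K + 1) → ℝ)
    (hfeas : (∀ i, 0 ≤ τstar i) ∧ (∑ i, τstar i) ≤ 1 ∧
      (∀ i : Fin K, 0 ≤ Estar i ∧ Estar i ≤ Eb i + w i * τstar 0) ∧
      (∑ i, Estar i) ≤ Emax)
    (hopt : ∀ (E : Fin K → ℝ) (τ : Fin (K + 1) → ℝ),
      (∀ i, 0 ≤ τ i) → (∑ i, τ i) ≤ 1 →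
      (∀ i : Fin K, 0 ≤ E i ∧ E i ≤ Eb i + w i * τ 0) →
      (∑ i, E i) ≤ Emax →
      (⨅ i : Fin K, τ i.succ * Real.logb 2 (1 + α i * E i / τ i.succ)) ≤
        ⨅ i : Fin K,
          τstar i.succ * Real.logb 2 (1 + α i * Estar i / τstar i.succ)) :
    ∀ i j : Fin K,
      τstar i.succ * Real.logb 2 (1 + α i * Estar i / τstar i.succ) =
        τstar j.succ * Real.logb 2 (1 + α j * Estar j / τstar j.succ) := by
  exact maxmin_equal_rates_general (p := (Estar, τstar)) (b := fun i s => Eb i + w i * s) hα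
    ⟨0, by simp, by simpa using hEb⟩ hEmax hfeas
    fun p ⟨hτ, hsum, hE, hEsum⟩ => hopt p.1 p.2 hτ hsum hE hEsum
end

section
/- Fix integers M ≥ 1, N ≥ 1 and reals γ_i > 0 (i = 1,…,M), θ_j > 0 (j = 1,…,N), a > 0, E_max > 0; set A₁ = Σ_i γ_i, A₂ = Σ_j θ_j, assume N·A₁ > a·A₂, let x₁* > 1 be the unique solution of x·ln x − x + 1 = A₁ − (a/N)·A₂, and let x* > 1 be the unique solution of x·ln x − x + 1 = A₁. Assume E_max ≤ a·(x₁* − 1)/(A₁ + x₁* − 1). Then the allocation τ₀* = min( (x* − 1)/(A₁ + x* − 1), E_max/a ), τ_{1,i}* = max( γ_i/(A₁ + x* − 1), (γ_i/A₁)·(1 − E_max/a) ) for all i, τ_{2,j}* = 0 for all j, and Ē* = 0 is feasible and maximizes Σ_{i=1}^M τ_{1,i}·log₂(1 + γ_i·τ₀/τ_{1,i}) + Σ_{j=1}^N τ_{2,j}·log₂(1 + θ_j·Ē/τ_{2,j}) over all (τ₀, τ_{1,1},…,τ_{1,M}, τ_{2,1},…,τ_{2,N}, Ē) ≥ 0 with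 τ₀ + Σ_i τ_{1,i} + Σ_j τ_{2,j} ≤ 1 and a·τ₀ + N·Ē ≤ E_max. -/
/-!
The argument is Lagrangian duality. The tangent line to `log` at a level `z = 1 + SNR` bounds the
rate of a user by a linear function in which, up to the common factor `1 / (z log 2)`, a unit of
time is worth `klFun z = z log z - z + 1` and a unit of received energy is worth `1`. Whenever a
price `μ ≥ 0` per unit of system energy makes neither charging nor legacy energy profitable, the
throughput is therefore at most `(klFun z + μ * Emax) / (z log 2)`. Splitting the time left after
charging proportionally to `γ` gives all harvesting users the same level `z`, so their tangent
bounds are equalities and the dual value is attained. The bound on `Emax` says exactly that this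
`z` is at most `x₁`, and then `klFun z ≤ klFun x₁ = A₁ - (a / N) * A₂` makes the legacy users
unprofitable at the price at which charging breaks even.
-/

open InformationTheory

theorem strictMonoOn_klFun_Ici_one : StrictMonoOn klFun (Set.Ici 1) := by
  refine strictMonoOn_of_deriv_pos (convex_Ici 1) continuous_klFun.continuousOn fun x hx ↦ ?_
  rw [interior_Ici, Set.mem_Ioi] at hx
  rw [deriv_klFun]
  exact Real.log_pos hx

theorem mul_log_one_add_div_le {t c z : ℝ} (ht : 0 ≤ t) (hc : 0 ≤ c) (hz : 0 < z) :
    t * Real.log (1 + c / t) ≤ (klFun z * t + c) / z := by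
  rcases ht.eq_or_lt with rfl | ht
  · simpa using div_nonneg hc hz.le
  have hpos : 0 < 1 + c / t := by positivity
  have tangent : Real.log (1 + c / t) ≤ Real.log z + ((1 + c / t) / z - 1) := by
    have h := Real.log_le_sub_one_of_pos (div_pos hpos hz)
    rw [Real.log_div hpos.ne' hz.ne'] at h
    linarith
  calc t * Real.log (1 + c / t)
      ≤ t * (Real.log z + ((1 + c / t) / z - 1)) := mul_le_mul_of_nonneg_left tangent ht.le
    _ = (klFun z * t + c) / z := by
      rw [klFun]
      field_simp
      ring

theorem mul_log_one_add_div_eq {t c : ℝ} (ht : t ≠ 0) (hz : 1 + c / t ≠ 0) :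
    t * Real.log (1 + c / t) = (klFun (1 + c / t) * t + c) / (1 + c / t) := by
  rw [eq_div_iff hz, klFun]
  linear_combination mul_div_cancel₀ c ht

section SumRate

variable {ι : Type*} [Fintype ι]

/-- The sum throughput of users with gains `g` transmitting for the times `τ`, each with received
energy proportional to `E`. A user with `τ i = 0` contributes `0`. Type I users are the case
`g = γ`, `E = τ₀`, and Type II users the case `g = θ`, `E = Ē`. -/
noncomputable def sumRate (g : ι → ℝ) (E : ℝ) (τ : ι → ℝ) : ℝ :=
  ∑ i, τ i * Real.logb 2 (1 + g i * E / τ i)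

@[simp]
theorem sumRate_zero_right (g : ι → ℝ) (E : ℝ) : sumRate g E 0 = 0 := by
  simp [sumRate]

theorem sumRate_le {g τ : ι → ℝ} {E z : ℝ} (hg : ∀ i, 0 ≤ g i) (hE : 0 ≤ E) (hτ : ∀ i, 0 ≤ τ i)
    (hz : 0 < z) :
    sumRate g E τ ≤ (klFun z * ∑ i, τ i + (∑ i, g i) * E) / (z * Real.log 2) := by
  rw [Finset.mul_sum, Finset.sum_mul, ← Finset.sum_add_distrib, Finset.sum_div]
  refine Finset.sum_le_sum fun i _ ↦ ?_
  rw [Real.logb, ← mul_div_assoc, ← div_div]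
  gcongr
  exact mul_log_one_add_div_le (hτ i) (mul_nonneg (hg i) hE) hz

/-- The division of a total time `T` among users in proportion to their gains `g`, the allocation
for which all users have the same signal-to-noise ratio. -/
noncomputable def proportionalTime (g : ι → ℝ) (T : ℝ) : ι → ℝ :=
  fun i ↦ g i / (∑ j, g j) * T

theorem proportionalTime_nonneg {g : ι → ℝ} {T : ℝ} (hg : ∀ i, 0 ≤ g i) (hT : 0 ≤ T) (i : ι) :
    0 ≤ proportionalTime g T i :=
  mul_nonneg (div_nonneg (hg i) (Finset.sum_nonneg fun j _ ↦ hg j)) hT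

theorem sum_proportionalTime {g : ι → ℝ} (hg : ∑ i, g i ≠ 0) (T : ℝ) :
    ∑ i, proportionalTime g T i = T := by
  simp only [proportionalTime]
  rw [← Finset.sum_mul, ← Finset.sum_div, div_self hg, one_mul]

theorem sumRate_proportionalTime {g : ι → ℝ} (hg : ∑ i, g i ≠ 0) (E T : ℝ) :
    sumRate g E (proportionalTime g T) = T * Real.logb 2 (1 + (∑ i, g i) * E / T) := by
  have common_level (i : ι) :
      proportionalTime g T i * Real.logb 2 (1 + g i * E / proportionalTime g T i) =
        proportionalTime g T i * Real.logb 2 (1 + (∑ j, g j) * E / T) := by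
    rcases eq_or_ne (g i) 0 with hi | hi
    · simp [proportionalTime, hi]
    · have : g i * E / proportionalTime g T i = (∑ j, g j) * E / T := by
        rw [proportionalTime]
        field_simp
      rw [this]
  rw [sumRate, Finset.sum_congr rfl fun i _ ↦ common_level i, ← Finset.sum_mul,
    sum_proportionalTime hg]

theorem sumRate_proportionalTime_eq_tangent {g : ι → ℝ} {E T z : ℝ} (hg : 0 < ∑ i, g i)
    (hE : 0 ≤ E) (hT : 0 < T) (hz : z = 1 + (∑ i, g i) * E / T) :
    sumRate g E (proportionalTime g T) =
      (klFun z * T + (∑ i, g i) * E) / (z * Real.log 2) := by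
  have hpos : 0 < 1 + (∑ i, g i) * E / T := by positivity
  rw [sumRate_proportionalTime hg.ne', Real.logb, ← mul_div_assoc,
    mul_log_one_add_div_eq hT.ne' hpos.ne', div_div, hz]

end SumRate

section Problem

variable {ι κ : Type*} [Fintype ι] [Fintype κ] {γ : ι → ℝ} {θ : κ → ℝ} {a n Emax : ℝ}

/-- Feasibility for problem P4: `a` is the system energy spent per unit of charging time `τ₀`, and
`n` the system energy spent per unit of the legacy energy `E`. In the paper `n` is the number of
Type II users; here it is an independent parameter. -/
structure P4Feasible (a n Emax τ₀ : ℝ) (τ₁ : ι → ℝ) (τ₂ : κ → ℝ) (E : ℝ) : Prop where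
  charging_nonneg : 0 ≤ τ₀
  harvesting_nonneg : ∀ i, 0 ≤ τ₁ i
  legacy_nonneg : ∀ j, 0 ≤ τ₂ j
  energy_nonneg : 0 ≤ E
  time_le : τ₀ + ∑ i, τ₁ i + ∑ j, τ₂ j ≤ 1
  energy_le : a * τ₀ + n * E ≤ Emax

theorem P4Feasible.sumRate_add_sumRate_le_dual {τ₀ E z μ : ℝ} {τ₁ : ι → ℝ} {τ₂ : κ → ℝ}
    (h : P4Feasible a n Emax τ₀ τ₁ τ₂ E) (hγ : ∀ i, 0 ≤ γ i) (hθ : ∀ j, 0 ≤ θ j)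
    (hz : 0 < z) (hμ : 0 ≤ μ) (charging_price : ∑ i, γ i ≤ klFun z + μ * a)
    (legacy_price : ∑ j, θ j ≤ μ * n) :
    sumRate γ τ₀ τ₁ + sumRate θ E τ₂ ≤ (klFun z + μ * Emax) / (z * Real.log 2) := by
  refine (add_le_add (sumRate_le hγ h.charging_nonneg h.harvesting_nonneg hz)
    (sumRate_le hθ h.energy_nonneg h.legacy_nonneg hz)).trans ?_
  rw [← add_div]
  refine div_le_div_of_nonneg_right ?_ (by positivity)
  calc (klFun z * ∑ i, τ₁ i + (∑ i, γ i) * τ₀) + (klFun z * ∑ j, τ₂ j + (∑ j, θ j) * E)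
      ≤ (klFun z * ∑ i, τ₁ i + (klFun z + μ * a) * τ₀) + (klFun z * ∑ j, τ₂ j + μ * n * E) := by
        have := h.charging_nonneg
        have := h.energy_nonneg
        gcongr
    _ = klFun z * (τ₀ + ∑ i, τ₁ i + ∑ j, τ₂ j) + μ * (a * τ₀ + n * E) := by ring
    _ ≤ klFun z * 1 + μ * Emax := by
        gcongr
        exacts [klFun_nonneg hz.le, h.time_le, h.energy_le]
    _ = klFun z + μ * Emax := by rw [mul_one]

theorem p4Feasible_proportionalTime (hγ : ∀ i, 0 ≤ γ i) (hγ_sum : ∑ i, γ i ≠ 0) (ha : 0 < a)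
    (hEmax : 0 ≤ Emax) (hEa : Emax / a ≤ 1) :
    P4Feasible a n Emax (Emax / a) (proportionalTime γ (1 - Emax / a)) (0 : κ → ℝ) 0 where
  charging_nonneg := by positivity
  harvesting_nonneg := proportionalTime_nonneg hγ (sub_nonneg.mpr hEa)
  legacy_nonneg _ := le_rfl
  energy_nonneg := le_rfl
  time_le := by simp [sum_proportionalTime hγ_sum]
  energy_le := by rw [mul_div_cancel₀ _ ha.ne', mul_zero, add_zero]

theorem P4Feasible.sumRate_add_sumRate_le_proportionalTime {τ₀ E z : ℝ} {τ₁ : ι → ℝ} {τ₂ : κ → ℝ}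
    (h : P4Feasible a n Emax τ₀ τ₁ τ₂ E) (hγ : ∀ i, 0 ≤ γ i) (hγ_sum : 0 < ∑ i, γ i)
    (hθ : ∀ j, 0 ≤ θ j) (ha : 0 < a) (hn : 0 < n) (hEmax : 0 ≤ Emax) (hEa : Emax / a < 1)
    (hz : z = 1 + (∑ i, γ i) * (Emax / a) / (1 - Emax / a))
    (hzle : klFun z ≤ ∑ i, γ i - a / n * ∑ j, θ j) :
    sumRate γ τ₀ τ₁ + sumRate θ E τ₂ ≤
      sumRate γ (Emax / a) (proportionalTime γ (1 - Emax / a)) := by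
  have hT : 0 < 1 - Emax / a := sub_pos.mpr hEa
  have hz_pos : 0 < z := by rw [hz]; positivity
  have hθ_sum : 0 ≤ ∑ j, θ j := Finset.sum_nonneg fun j _ ↦ hθ j
  -- The energy price at which charging breaks even.
  set μ := (∑ i, γ i - klFun z) / a with hμ
  have charging_price : ∑ i, γ i = klFun z + μ * a := by rw [hμ]; field_simp; ring
  have legacy_price : ∑ j, θ j ≤ μ * n := by
    calc ∑ j, θ j = a / n * (∑ j, θ j) / a * n := by field_simp
      _ ≤ μ * n := by rw [hμ]; gcongr; linarith
  have hμ_nonneg : 0 ≤ μ := nonneg_of_mul_nonneg_left (hθ_sum.trans legacy_price) hn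
  calc sumRate γ τ₀ τ₁ + sumRate θ E τ₂
      ≤ (klFun z + μ * Emax) / (z * Real.log 2) :=
        h.sumRate_add_sumRate_le_dual hγ hθ hz_pos hμ_nonneg charging_price.le legacy_price
    _ = (klFun z * (1 - Emax / a) + (∑ i, γ i) * (Emax / a)) / (z * Real.log 2) := by
        rw [hμ]; ring
    _ = sumRate γ (Emax / a) (proportionalTime γ (1 - Emax / a)) :=
        (sumRate_proportionalTime_eq_tangent hγ_sum (div_nonneg hEmax ha.le) hT hz).symm

end Problem

theorem le_sub_one_div_iff {A e y : ℝ} (hden : 0 < A + y - 1) (he : e < 1) :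
    e ≤ (y - 1) / (A + y - 1) ↔ 1 + A * e / (1 - e) ≤ y := by
  rw [le_div_iff₀ hden, ← le_sub_iff_add_le', div_le_iff₀ (sub_pos.mpr he)]
  constructor <;> intro h <;> linarith

theorem max_proportional_eq_right {A g e y : ℝ} (hA : 0 < A) (hg : 0 ≤ g) (hden : 0 < A + y - 1)
    (he : e ≤ (y - 1) / (A + y - 1)) :
    max (g / (A + y - 1)) (g / A * (1 - e)) = g / A * (1 - e) := by
  refine max_eq_right ?_
  calc g / (A + y - 1) = g / A * (1 - (y - 1) / (A + y - 1)) := by field_simp; ring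
    _ ≤ g / A * (1 - e) := by gcongr

theorem P4_opt_small_Emax_general {ι κ : Type*} [Fintype ι] [Fintype κ] {γ : ι → ℝ} {θ : κ → ℝ}
    {a n Emax A₁ A₂ x₁ x : ℝ} (hγ : ∀ i, 0 ≤ γ i) (hθ : ∀ j, 0 ≤ θ j) (ha : 0 < a) (hn : 0 < n)
    (hEmax : 0 ≤ Emax) (hA₁ : A₁ = ∑ i, γ i) (hA₂ : A₂ = ∑ j, θ j) (hx₁ : 1 < x₁)
    (hx₁eq : klFun x₁ = A₁ - a / n * A₂) (hx : 1 < x) (hxeq : klFun x = A₁)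
    (hEmax_hi : Emax ≤ a * (x₁ - 1) / (A₁ + x₁ - 1)) {τ₀s : ℝ} {τ₁s : ι → ℝ}
    (hτ₀s : τ₀s = min ((x - 1) / (A₁ + x - 1)) (Emax / a))
    (hτ₁s : ∀ i, τ₁s i = max (γ i / (A₁ + x - 1)) (γ i / A₁ * (1 - Emax / a))) :
    P4Feasible a n Emax τ₀s τ₁s (0 : κ → ℝ) 0 ∧
      ∀ τ₀ τ₁ τ₂ E, P4Feasible a n Emax τ₀ τ₁ τ₂ E →
        sumRate γ τ₀ τ₁ + sumRate θ E τ₂ ≤ sumRate γ τ₀s τ₁s + sumRate θ 0 0 := by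
  have hA₁_pos : 0 < A₁ := by
    rw [← hxeq, ← klFun_one]
    exact strictMonoOn_klFun_Ici_one (Set.mem_Ici.mpr le_rfl) hx.le hx
  have hA₂_nonneg : 0 ≤ A₂ := hA₂ ▸ Finset.sum_nonneg fun j _ ↦ hθ j
  have hden₁ : 0 < A₁ + x₁ - 1 := by linarith
  have hden : 0 < A₁ + x - 1 := by linarith
  have hx₁x : x₁ ≤ x := by
    rw [← strictMonoOn_klFun_Ici_one.le_iff_le hx₁.le hx.le, hx₁eq, hxeq, sub_le_self_iff]
    positivity
  have he : Emax / a ≤ (x₁ - 1) / (A₁ + x₁ - 1) := by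
    rwa [div_le_iff₀' ha, ← mul_div_assoc]
  have he_lt : Emax / a < 1 := he.trans_lt ((div_lt_one hden₁).mpr (by linarith))
  have hz_le := (le_sub_one_div_iff hden₁ he_lt).mp he
  have he_x := (le_sub_one_div_iff hden he_lt).mpr (hz_le.trans hx₁x)
  obtain rfl : τ₀s = Emax / a := hτ₀s.trans (min_eq_right he_x)
  have hτ₁s_eq (i : ι) : τ₁s i = γ i / A₁ * (1 - Emax / a) :=
    (hτ₁s i).trans (max_proportional_eq_right hA₁_pos (hγ i) hden he_x)
  have hz_ge : 1 ≤ 1 + A₁ * (Emax / a) / (1 - Emax / a) :=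
    le_add_of_nonneg_right (div_nonneg (by positivity) (sub_nonneg.mpr he_lt.le))
  have hklFun := (strictMonoOn_klFun_Ici_one.monotoneOn hz_ge hx₁.le hz_le).trans_eq hx₁eq
  subst hA₁ hA₂
  obtain rfl : τ₁s = proportionalTime γ (1 - Emax / a) := funext hτ₁s_eq
  refine ⟨p4Feasible_proportionalTime hγ hA₁_pos.ne' ha hEmax he_lt.le, fun τ₀ τ₁ τ₂ E h ↦ ?_⟩
  rw [sumRate_zero_right, add_zero]
  exact h.sumRate_add_sumRate_le_proportionalTime hγ hA₁_pos hθ ha hn hEmax he_lt rfl hklFun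

/-- Small-`E_max` regime of Theorem 3 of the paper (all resources to the
energy-harvesting, Type I, nodes): with `A₁ = Σᵢ γᵢ`, `A₂ = Σⱼ θⱼ`,
`N A₁ > a A₂`, `x₁* > 1` solving `x ln x - x + 1 = A₁ - (a/N) A₂`, `x* > 1`
solving `x ln x - x + 1 = A₁`, and `E_max ≤ a (x₁*-1)/(A₁+x₁*-1)`, the
allocation `τ₀* = min((x*-1)/(A₁+x*-1), E_max/a)`,
`τ_{1,i}* = max(γᵢ/(A₁+x*-1), (γᵢ/A₁)(1 - E_max/a))`, `τ_{2,j}* = 0`,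
`Ē* = 0` is feasible and maximizes the sum throughput of problem P4.
(In Lean, `τ * Real.logb 2 (1 + c / τ)` equals `0` at `τ = 0`.) -/
theorem P4_opt_small_Emax (M N : ℕ) (hM : 1 ≤ M) (hN : 1 ≤ N)
    (γ : Fin M → ℝ) (θ : Fin N → ℝ) (a Emax : ℝ)
    (hγ : ∀ i, 0 < γ i) (hθ : ∀ j, 0 < θ j) (ha : 0 < a) (hEmax : 0 < Emax)
    (A₁ A₂ x₁ x : ℝ) (hA₁ : A₁ = ∑ i, γ i) (hA₂ : A₂ = ∑ j, θ j)
    (hNA : (N : ℝ) * A₁ > a * A₂) (hx₁ : 1 < x₁)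
    (hx₁eq : x₁ * Real.log x₁ - x₁ + 1 = A₁ - (a / (N : ℝ)) * A₂)
    (hx : 1 < x) (hxeq : x * Real.log x - x + 1 = A₁)
    (hEmax_hi : Emax ≤ a * (x₁ - 1) / (A₁ + x₁ - 1))
    (τ0s : ℝ) (τ1s : Fin M → ℝ)
    (hτ0s : τ0s = min ((x - 1) / (A₁ + x - 1)) (Emax / a))
    (hτ1s : ∀ i, τ1s i =
      max (γ i / (A₁ + x - 1)) ((γ i / A₁) * (1 - Emax / a))) :
    (0 ≤ τ0s ∧ (∀ i, 0 ≤ τ1s i) ∧ (∀ j : Fin N, (0:ℝ) ≤ 0) ∧ (0:ℝ) ≤ 0 ∧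
      τ0s + (∑ i, τ1s i) + (∑ _j : Fin N, (0:ℝ)) ≤ 1 ∧
      a * τ0s + (N : ℝ) * 0 ≤ Emax) ∧
    ∀ (τ0 : ℝ) (τ1 : Fin M → ℝ) (τ2 : Fin N → ℝ) (Ebar : ℝ),
      0 ≤ τ0 → (∀ i, 0 ≤ τ1 i) → (∀ j, 0 ≤ τ2 j) → 0 ≤ Ebar →
      τ0 + (∑ i, τ1 i) + (∑ j, τ2 j) ≤ 1 →
      a * τ0 + (N : ℝ) * Ebar ≤ Emax →
      (∑ i, τ1 i * Real.logb 2 (1 + γ i * τ0 / τ1 i)) +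
          (∑ j, τ2 j * Real.logb 2 (1 + θ j * Ebar / τ2 j)) ≤
        (∑ i, τ1s i * Real.logb 2 (1 + γ i * τ0s / τ1s i)) +
          ∑ _j : Fin N, (0:ℝ) *
            Real.logb 2 (1 + θ _j * (0:ℝ) / (0:ℝ)) := by
  obtain ⟨⟨h₀, h₁, h₂, hE, ht, he⟩, hmax⟩ := P4_opt_small_Emax_general (n := N)
    (fun i ↦ (hγ i).le) (fun j ↦ (hθ j).le) ha (by exact_mod_cast hN) hEmax.le hA₁ hA₂ hx₁
    (by rw [klFun, ← hx₁eq]; ring) hx (by rw [klFun, ← hxeq]; ring) hEmax_hi hτ0s hτ1s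
  exact ⟨⟨h₀, h₁, h₂, hE, ht, he⟩, fun τ0 τ1 τ2 Ebar h₀ h₁ h₂ hE ht he ↦
    hmax τ0 τ1 τ2 Ebar ⟨h₀, h₁, h₂, hE, ht, he⟩⟩
end
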